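/- Let n ≥ 1. The infimum, over all nonempty bounded open convex sets P ⊆ ℝ^n and all convex Lebesgue-integrable functions φ : P → ℝ with ∫_P φ dμ = 0 and inf_P φ < 0, of the ratio (∫_P |φ| dμ) / (−μ(P) · inf_P φ), equals (2/(n+1))·(n/(n+1))^n; moreover this infimum is attained (by the open simplex P with vertices 0 and ((n+1)/n)e_i, 1 ≤ i ≤ n, together with φ(x) = −1 + x_1 + … + x_n). -/

import Mathlib

open MeasureTheory Set
open scoped Pointwise

/-!
Write `φ⁻ = max (-φ) 0`. As `φ` has mean zero, `∫ |φ| = 2 ∫ φ⁻`.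

*Lower bound.* Let `x₀ ∈ P`. The homothety `y ↦ s y + (1 - s) x₀` of ratio `s = n/(n+1)` maps `P`
into itself, and convexity gives `φ⁻ (s y + (1 - s) x₀) ≥ -s φ y - (1 - s) φ x₀`. Integrating over
`y ∈ P` and changing variables yields `∫ φ⁻ ≥ -s ^ n (1 - s) φ x₀ μ(P)` (`homothety_bound`); then
take the infimum over `x₀`.

*Attainment.* For `Q t = {x | 0 < xᵢ, ∑ xᵢ < t}` scaling gives `μ (Q t) = t ^ n μ (Q 1)`, and the
layer cake formula gives `∫_{Q t} (t - ∑ xᵢ) = t ^ (n+1) / (n+1) * μ (Q 1)`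
(`integral_openSimplex`). Taking `t = (n+1)/n` and `t = 1` evaluates the mean of `φ` and `∫ φ⁻` for
the proposed minimiser.
-/

/-- The positive and negative parts of a centered integrable function have the same integral, so
the `L¹` norm is twice the integral of the negative part. -/
lemma integral_abs_eq_two_mul {n : ℕ} {P : Set (Fin n → ℝ)} {φ : (Fin n → ℝ) → ℝ}
    (hint : IntegrableOn φ P volume) (h0 : (∫ x in P, φ x) = 0) :
    (∫ x in P, |φ x|) = 2 * ∫ x in P, max (-φ x) 0 := by
  have h1 : ∀ x, |φ x| = φ x + 2 * max (-φ x) 0 := by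
    intro x
    rcases le_total 0 (φ x) with h | h
    · rw [abs_of_nonneg h, max_eq_right (by linarith)]; ring
    · rw [abs_of_nonpos h, max_eq_left (by linarith)]; ring
  simp_rw [h1]
  have h2 : IntegrableOn (fun x => max (-φ x) 0) P volume := Integrable.neg_part hint
  rw [integral_add hint (h2.const_mul 2), h0, zero_add, integral_const_mul]

/-- Comparison of `∫ φ⁻` over `P` with its integral over the image of `P` under the homothety of
ratio `s` centered at `x₀`, bounded below on that image by convexity. -/
lemma homothety_bound {n : ℕ} {P : Set (Fin n → ℝ)} {φ : (Fin n → ℝ) → ℝ}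
    (hb : Bornology.IsBounded P) (ho : IsOpen P)
    (hφ : ConvexOn ℝ P φ) (hint : IntegrableOn φ P volume) (h0 : (∫ x in P, φ x) = 0)
    {x₀ : Fin n → ℝ} (hx₀ : x₀ ∈ P) {s : ℝ} (hs : 0 < s) (hs1 : s ≤ 1) :
    s ^ n * ((1 - s) * (-φ x₀) * (volume P).toReal) ≤ ∫ x in P, max (-φ x) 0 := by
  have hm : MeasurableSet P := ho.measurableSet
  have hfin : volume P ≠ ⊤ := hb.measure_lt_top.ne
  set g : (Fin n → ℝ) → ℝ := P.indicator (fun x => max (-φ x) 0) with hg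
  have hgint : Integrable g := by
    rw [hg, integrable_indicator_iff hm]
    exact Integrable.neg_part hint
  have hg0 : ∀ x, 0 ≤ g x := fun x => indicator_nonneg (fun _ _ => le_max_right _ _) x
  have hcv : ∫ y, g (s • y + (1 - s) • x₀) = (s ^ n)⁻¹ * ∫ x in P, max (-φ x) 0 := by
    rw [Measure.integral_comp_smul volume (fun z => g (z + (1 - s) • x₀)) s,
      integral_add_right_eq_self g, hg, integral_indicator hm]
    simp [abs_of_pos hs]
  have hcint : Integrable (fun y => g (s • y + (1 - s) • x₀)) :=
    (hgint.comp_add_right ((1 - s) • x₀)).comp_smul hs.ne'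
  have hlow : IntegrableOn (fun y => -(s * φ y) + (1 - s) * (-φ x₀)) P volume :=
    (hint.const_mul s).neg.add (integrableOn_const hfin)
  have hle : ∫ y in P, (-(s * φ y) + (1 - s) * (-φ x₀)) ≤ ∫ y, g (s • y + (1 - s) • x₀) := by
    refine le_trans ?_ (setIntegral_le_integral (s := P) hcint (.of_forall fun y => hg0 _))
    refine setIntegral_mono_on hlow hcint.integrableOn hm fun y hy => ?_
    have hmem : s • y + (1 - s) • x₀ ∈ P :=
      hφ.1 hy hx₀ hs.le (by linarith) (by ring)
    have := hφ.2 hy hx₀ hs.le (by linarith : 0 ≤ 1 - s) (by ring)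
    rw [hg, indicator_of_mem hmem]
    simp only [smul_eq_mul] at this
    exact le_max_of_le_left (by linarith)
  have hval : ∫ y in P, (-(s * φ y) + (1 - s) * (-φ x₀))
      = (1 - s) * (-φ x₀) * (volume P).toReal := by
    have hneg : IntegrableOn (fun y => -(s * φ y)) P volume := (hint.const_mul s).neg
    rw [integral_add hneg (integrableOn_const hfin), integral_neg, integral_const_mul, h0]
    simp [Measure.real]; ring
  rw [hval, hcv] at hle
  calc _ ≤ s ^ n * ((s ^ n)⁻¹ * ∫ x in P, max (-φ x) 0) := by gcongr
    _ = _ := by field_simp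

/-- The open simplex with vertices `0` and `t eᵢ` (empty for `t ≤ 0`). -/
def openSimplex (n : ℕ) (t : ℝ) : Set (Fin n → ℝ) := {x | (∀ i, 0 < x i) ∧ ∑ i, x i < t}

lemma isOpen_openSimplex (n : ℕ) (t : ℝ) : IsOpen (openSimplex n t) := by
  have h : openSimplex n t = (⋂ i, {x | 0 < x i}) ∩ {x | ∑ i, x i < t} := by
    ext x; simp [openSimplex]
  rw [h]
  exact (isOpen_iInter_of_finite fun i => isOpen_lt (by fun_prop) (by fun_prop)).inter
    (isOpen_lt (by fun_prop) (by fun_prop))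

lemma isBounded_openSimplex (n : ℕ) (t : ℝ) : Bornology.IsBounded (openSimplex n t) := by
  refine (Metric.isBounded_Icc (0 : Fin n → ℝ) (fun _ => t)).subset fun x hx => ?_
  refine ⟨fun i => (hx.1 i).le, fun i => ?_⟩
  exact (Finset.single_le_sum (fun j _ => (hx.1 j).le) (Finset.mem_univ i)).trans hx.2.le

lemma convex_openSimplex (n : ℕ) (t : ℝ) : Convex ℝ (openSimplex n t) := by
  have h : openSimplex n t = (⋂ i, {x | 0 < x i}) ∩ {x | ∑ i, x i < t} := by
    ext x; simp [openSimplex]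
  rw [h]
  refine (convex_iInter fun i => ?_).inter ?_
  · exact convex_halfSpace_gt (LinearMap.proj (R := ℝ) (φ := fun _ : Fin n => ℝ) i).isLinear 0
  · refine convex_halfSpace_lt (f := fun x : Fin n → ℝ => ∑ i, x i) ⟨?_, ?_⟩ t
    · intro x y; simp [Finset.sum_add_distrib]
    · intro c x; simp [Finset.mul_sum]

/-- The point with all coordinates equal to `c` lies in `openSimplex n t` for `0 < c`, `n c < t`. -/
lemma const_mem_openSimplex {n : ℕ} {t c : ℝ} (hc : 0 < c) (h : n * c < t) :
    (fun _ => c) ∈ openSimplex n t := ⟨fun _ => hc, by simpa using h⟩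

lemma volume_openSimplex_one_pos {n : ℕ} (hn : 1 ≤ n) :
    0 < (volume (openSimplex n 1)).toReal := by
  have hn' : (1 : ℝ) ≤ n := by exact_mod_cast hn
  refine ENNReal.toReal_pos ((isOpen_openSimplex n 1).measure_pos volume
    ⟨_, const_mem_openSimplex (c := 1 / (n + 1)) (by positivity) ?_⟩).ne'
    (isBounded_openSimplex n 1).measure_lt_top.ne
  rw [mul_one_div, div_lt_one (by positivity)]; linarith

lemma volume_openSimplex (n : ℕ) {t : ℝ} (ht : 0 < t) :
    (volume (openSimplex n t)).toReal = t ^ n * (volume (openSimplex n 1)).toReal := by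
  have h : openSimplex n t = t • openSimplex n 1 := by
    ext x
    rw [mem_smul_set_iff_inv_smul_mem₀ ht.ne']
    simp only [openSimplex, mem_ofPred_eq, Pi.smul_apply, smul_eq_mul, ← Finset.mul_sum,
      inv_mul_lt_iff₀ ht, mul_one]
    simp [ht]
  rw [h, Measure.addHaar_smul_of_nonneg volume ht.le]
  simp [ht.le]

lemma openSimplex_eq_empty {n : ℕ} {t : ℝ} (ht : t ≤ 0) : openSimplex n t = ∅ := by
  ext x
  simp only [openSimplex, mem_ofPred_eq, mem_empty_iff_false, iff_false, not_and, not_lt]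
  exact fun h => ht.trans (Finset.sum_nonneg fun i _ => (h i).le)

lemma integrableOn_openSimplex {n : ℕ} {t : ℝ} {f : (Fin n → ℝ) → ℝ} (hf : Continuous f) :
    IntegrableOn f (openSimplex n t) volume :=
  (hf.continuousOn.integrableOn_compact (isBounded_openSimplex n t).isCompact_closure).mono_set
    subset_closure

/-- The volume under the graph of `t - ∑ xᵢ` over the simplex, sliced horizontally. -/
lemma integral_openSimplex (n : ℕ) {t : ℝ} (ht : 0 < t) :
    ∫ x in openSimplex n t, (t - ∑ i, x i)
      = t ^ (n + 1) / (n + 1) * (volume (openSimplex n 1)).toReal := by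
  have hm := (isOpen_openSimplex n t).measurableSet
  have hint : IntegrableOn (fun x : Fin n → ℝ => t - ∑ i, x i) (openSimplex n t) volume :=
    integrableOn_openSimplex (by fun_prop)
  rw [Integrable.integral_eq_integral_meas_lt hint
    ((ae_restrict_mem hm).mono fun x hx => sub_nonneg.2 hx.2.le)]
  have hslice : ∀ u ∈ Ioi (0 : ℝ),
      (volume.restrict (openSimplex n t)).real {x | u < t - ∑ i, x i}
        = (Ioo 0 t).indicator
          (fun u => (t - u) ^ n * (volume (openSimplex n 1)).toReal) u := by
    intro u hu
    have hu : 0 < u := hu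
    have hset : {x : Fin n → ℝ | u < t - ∑ i, x i} ∩ openSimplex n t = openSimplex n (t - u) := by
      ext x
      simp only [openSimplex, mem_inter_iff, mem_ofPred_eq]
      constructor
      · rintro ⟨h1, h2, -⟩; exact ⟨h2, by linarith⟩
      · rintro ⟨h1, h2⟩; exact ⟨by linarith, h1, by linarith⟩
    rw [Measure.real, Measure.restrict_apply' hm, hset]
    rcases lt_or_ge u t with h | h
    · rw [indicator_of_mem (mem_Ioo.2 ⟨hu, h⟩), volume_openSimplex n (sub_pos.2 h)]
    · rw [indicator_of_notMem (fun h' => h.not_gt h'.2), openSimplex_eq_empty (sub_nonpos.2 h)]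
      simp
  rw [setIntegral_congr_fun measurableSet_Ioi hslice, setIntegral_indicator measurableSet_Ioo,
    inter_eq_self_of_subset_right Ioo_subset_Ioi_self, ← integral_Ioc_eq_integral_Ioo,
    ← intervalIntegral.integral_of_le ht.le,
    intervalIntegral.integral_mul_const,
    intervalIntegral.integral_comp_sub_left (fun u => u ^ n) t]
  simp

/-- The infimum of the ratios `(∫_P |φ|)/(-μ(P) inf_P φ)` over all nonempty bounded open
convex `P ⊆ ℝⁿ` and all centered convex integrable `φ : P → ℝ` with negative infimum
equals `(2/(n+1)) (n/(n+1))^n`, and this infimum is attained. -/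
theorem stmt_11 (n : ℕ) (hn : 1 ≤ n)
    (S : Set ℝ)
    (hS : S = {r : ℝ | ∃ (P : Set (Fin n → ℝ)) (φ : (Fin n → ℝ) → ℝ),
      P.Nonempty ∧ Bornology.IsBounded P ∧ IsOpen P ∧ Convex ℝ P ∧
      ConvexOn ℝ P φ ∧ IntegrableOn φ P volume ∧ (∫ x in P, φ x) = 0 ∧
      sInf (φ '' P) < 0 ∧
      r = (∫ x in P, |φ x|) / (-((volume P).toReal * sInf (φ '' P)))}) :
    IsGLB S ((2 / (n + 1 : ℝ)) * ((n : ℝ) / (n + 1)) ^ n) ∧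
      (2 / (n + 1 : ℝ)) * ((n : ℝ) / (n + 1)) ^ n ∈ S := by
  have hn' : (1 : ℝ) ≤ n := by exact_mod_cast hn
  have hn0 : (0 : ℝ) < n := by linarith
  have hmem : (2 / (n + 1 : ℝ)) * ((n : ℝ) / (n + 1)) ^ n ∈ S := by
    set T : ℝ := (n + 1) / n with hT
    have hT1 : 1 < T := by rw [hT, lt_div_iff₀ hn0]; linarith
    have hT0 : 0 < T := by linarith
    set v := (volume (openSimplex n 1)).toReal with hv
    have hv0 : 0 < v := volume_openSimplex_one_pos hn
    set φ : (Fin n → ℝ) → ℝ := fun x => -1 + ∑ i, x i with hφ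
    have hint : IntegrableOn φ (openSimplex n T) volume :=
      integrableOn_openSimplex (by fun_prop)
    have hvol := volume_openSimplex n hT0
    have hI0 : ∫ x in openSimplex n T, φ x = 0 := by
      have h1 : ∀ x, φ x = (T - 1) - (T - ∑ i, x i) := fun x => by simp only [hφ]; ring
      simp_rw [h1]
      rw [integral_sub (integrableOn_openSimplex continuous_const)
        (integrableOn_openSimplex (by fun_prop)), integral_openSimplex n hT0]
      simp only [integral_const, smul_eq_mul, Measure.real, Measure.restrict_apply_univ, hvol]
      rw [pow_succ, ← hv]
      have : T - 1 = T / (n + 1) := by rw [hT]; field_simp; ring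
      rw [this]; ring
    have hneg : ∫ x in openSimplex n T, max (-φ x) 0 = v / (n + 1) := by
      -- `φ⁻` is supported on the smaller simplex `∑ xᵢ < 1`
      have h1 : ∀ x ∈ openSimplex n T,
          max (-φ x) 0 = (openSimplex n 1).indicator (fun x => 1 - ∑ i, x i) x := by
        intro x hx
        by_cases h : x ∈ openSimplex n 1
        · rw [indicator_of_mem h, max_eq_left]
          · simp only [hφ]; ring
          · have := h.2; simp only [hφ]; linarith
        · rw [indicator_of_notMem h, max_eq_right]
          have : ¬ ∑ i, x i < 1 := fun h' => h ⟨hx.1, h'⟩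
          simp only [hφ]; linarith
      have hsub : openSimplex n 1 ⊆ openSimplex n T := fun x hx => ⟨hx.1, hx.2.trans hT1⟩
      rw [setIntegral_congr_fun (isOpen_openSimplex n T).measurableSet h1,
        setIntegral_indicator (isOpen_openSimplex n 1).measurableSet,
        inter_eq_self_of_subset_right hsub, integral_openSimplex n one_pos]
      simp only [one_pow, hv]; ring
    have hne : (openSimplex n T).Nonempty :=
      ⟨_, const_mem_openSimplex (c := 1 / n) (by positivity) (by field_simp; exact hT1)⟩
    have hinf : sInf (φ '' openSimplex n T) = -1 := by
      refine csInf_eq_of_forall_ge_of_forall_gt_exists_lt (hne.image _) ?_ ?_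
      · rintro _ ⟨x, hx, rfl⟩
        have : 0 ≤ ∑ i, x i := Finset.sum_nonneg fun i _ => (hx.1 i).le
        simp only [hφ]; linarith
      · intro w hw
        -- values near `-1` are taken along the diagonal, close to the vertex `0`
        have hd : 0 < min ((w + 1) / 2) 1 := lt_min (by linarith) one_pos
        have hd1 := min_le_left ((w + 1) / 2) 1
        have hd2 := min_le_right ((w + 1) / 2) 1
        set d := min ((w + 1) / 2) 1
        have hnd : (n : ℝ) * (d / n) = d := by field_simp
        refine ⟨_, ⟨_, const_mem_openSimplex (c := d / n) (by positivity) (by linarith), rfl⟩, ?_⟩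
        simp only [hφ, Finset.sum_const, Finset.card_univ, Fintype.card_fin, nsmul_eq_mul, hnd]
        linarith
    rw [hS]
    refine ⟨openSimplex n T, φ, hne, isBounded_openSimplex n T, isOpen_openSimplex n T,
      convex_openSimplex n T, ⟨convex_openSimplex n T, ?_⟩, hint, hI0, by rw [hinf]; norm_num, ?_⟩
    · intro x _ y _ a b _ _ hab
      simp only [hφ, Pi.add_apply, Pi.smul_apply, smul_eq_mul, Finset.sum_add_distrib,
        ← Finset.mul_sum]
      linear_combination hab
    · rw [integral_abs_eq_two_mul hint hI0, hneg, hinf, hvol, ← hv]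
      have : (n : ℝ) / (n + 1) = T⁻¹ := by rw [hT, inv_div]
      rw [this, inv_pow]
      field_simp
  refine ⟨⟨?_, fun b hb => hb hmem⟩, hmem⟩
  intro r hr
  rw [hS] at hr
  obtain ⟨P, φ, hne, hb, ho, -, hφ, hint, h0, hinf, rfl⟩ := hr
  have hV : 0 < (volume P).toReal :=
    ENNReal.toReal_pos (ho.measure_pos volume hne).ne' hb.measure_lt_top.ne
  rw [integral_abs_eq_two_mul hint h0]
  set V := (volume P).toReal
  set J := ∫ x in P, max (-φ x) 0
  have hs : (0 : ℝ) < n / (n + 1) := by positivity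
  have hs1 : (n : ℝ) / (n + 1) ≤ 1 := by rw [div_le_one (by positivity)]; linarith
  set s : ℝ := n / (n + 1) with hsdef
  have hs2 : 1 - s = 1 / (n + 1) := by rw [hsdef]; field_simp; ring
  have hK : 0 < s ^ n * (1 / (n + 1)) * V := by positivity
  have hlow : -(J / (s ^ n * (1 / (n + 1)) * V)) ≤ sInf (φ '' P) := by
    refine le_csInf (hne.image φ) ?_
    rintro _ ⟨x, hx, rfl⟩
    have := homothety_bound hb ho hφ hint h0 hx hs hs1
    rw [hs2] at this
    rw [neg_le, le_div_iff₀ hK]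
    linarith
  rw [neg_le, le_div_iff₀ hK] at hlow
  rw [le_div_iff₀ (by nlinarith)]
  calc _ = 2 * (-sInf (φ '' P) * (s ^ n * (1 / (n + 1)) * V)) := by ring
    _ ≤ _ := by linarith
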